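/- Let r > 0 and let g₁, g₂ be holomorphic on the polydisc P_r := {(X,Y) ∈ ℂ² : |X| < r, |Y| < r} with g₁(0,0) = g₂(0,0) = 0. Let D := {(z,ξ) ∈ ℂ* × ℂ : Π(z,ξ) ∈ P_r}, and define Φ(z,ξ) := (z·(1 + g₁(Π(z,ξ))), ξ + g₂(Π(z,ξ))) on D, and φ(X,Y) := (X·exp(2πi·g₂(X,Y)), Y·(1 + g₁(X,Y))·exp(2πiτ·g₂(X,Y))) on P_r. Then: (i) Π(Φ(z,ξ)) = φ(Π(z,ξ)) for every (z,ξ) ∈ D; (ii) φ is holomorphic on P_r with φ(0,0) = (0,0) and derivative at (0,0) equal to the identity; (iii) D is invariant under F₁₀₀, and Φ(q·z, ξ−1) = F₁₀₀(Φ(z,ξ)) for every (z,ξ) ∈ D, i.e. Φ commutes with F₁₀₀. -/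

import Mathlib

open Complex

/-- The Serre map `Π(z,ξ) = (exp(2πiξ), z·exp(2πiτξ))`. -/
noncomputable def PiMap (τ : ℂ) (p : ℂ × ℂ) : ℂ × ℂ :=
  (Complex.exp (2 * (Real.pi : ℂ) * Complex.I * p.2),
   p.1 * Complex.exp (2 * (Real.pi : ℂ) * Complex.I * τ * p.2))

/-- The map `F₁₀₀(z,ξ) = (q·z, ξ−1)` with `q = exp(2πiτ)`. -/
noncomputable def F100 (τ : ℂ) (p : ℂ × ℂ) : ℂ × ℂ :=
  (Complex.exp (2 * (Real.pi : ℂ) * Complex.I * τ) * p.1, p.2 - 1)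

/-- The sectorial transformation `Φ(z,ξ) = (z·(1+g₁(Π(z,ξ))), ξ + g₂(Π(z,ξ)))`. -/
noncomputable def PhiLift (τ : ℂ) (g₁ g₂ : ℂ × ℂ → ℂ) (p : ℂ × ℂ) : ℂ × ℂ :=
  (p.1 * (1 + g₁ (PiMap τ p)), p.2 + g₂ (PiMap τ p))

/-- The induced map `φ(X,Y) = (X·e^{2πi g₂}, Y·(1+g₁)·e^{2πiτ g₂})` downstairs. -/
noncomputable def phiDown (τ : ℂ) (g₁ g₂ : ℂ × ℂ → ℂ) (w : ℂ × ℂ) : ℂ × ℂ :=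
  (w.1 * Complex.exp (2 * (Real.pi : ℂ) * Complex.I * g₂ w),
   w.2 * (1 + g₁ w) * Complex.exp (2 * (Real.pi : ℂ) * Complex.I * τ * g₂ w))

/-!
`Π` is a homomorphism from `ℂ* × ℂ` onto `ℂ* × ℂ*`, and `F₁₀₀` is translation by the element
`(q, -1)` of its kernel, so `Π ∘ F₁₀₀ = Π`. The map `Φ` translates each point by an amount depending
only on its image under `Π`. Hence `Φ` commutes with `F₁₀₀`, and downstairs it becomes
multiplication of `X` and `Y` by the image under `Π` of that amount, which is `φ`. These multipliers
are continuous and equal `1` at the origin, so the derivative of `φ` there is the identity.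
-/

open Topology Asymptotics

theorem hasFDerivAt_smul_of_continuousAt_of_eq_zero {𝕜 𝕜' E F : Type*}
    [NontriviallyNormedField 𝕜] [SeminormedRing 𝕜']
    [NormedAddCommGroup E] [NormedSpace 𝕜 E]
    [NormedAddCommGroup F] [NormedSpace 𝕜 F] [Module 𝕜' F] [IsBoundedSMul 𝕜' F]
    [SMulCommClass 𝕜 𝕜' F]
    {c : E → 𝕜'} {f : E → F} {f' : E →L[𝕜] F} {a : E}
    (hc : ContinuousAt c a) (hf : HasFDerivAt f f' a) (hfa : f a = 0) :
    HasFDerivAt (fun x => c x • f x) (c a • f') a := by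
  have hremainder : (fun x => c x • (f x - f a - f' (x - a))) =o[𝓝 a] fun x => x - a := by
    simpa only [one_smul] using (hc.isBigO_one 𝕜).smul_isLittleO hf.isLittleO
  have hvariation : (fun x => (c x - c a) • f' (x - a)) =o[𝓝 a] fun x => x - a := by
    have hsmall : (fun x => c x - c a) =o[𝓝 a] fun _ => (1 : 𝕜) :=
      (isLittleO_one_iff 𝕜).mpr (tendsto_sub_nhds_zero_iff.mpr hc)
    simpa only [one_smul] using hsmall.smul_isBigO (f'.isBigO_sub (𝓝 a) a)
  refine .of_isLittleO ((hremainder.add hvariation).congr_left fun x => ?_)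
  simp only [hfa, smul_zero, sub_zero, smul_sub, sub_smul, smul_apply]
  abel

theorem polydisc_mem_nhds_zero {E F : Type*}
    [SeminormedAddCommGroup E] [SeminormedAddCommGroup F] {r : ℝ} (hr : 0 < r) :
    {w : E × F | ‖w.1‖ < r ∧ ‖w.2‖ < r} ∈ 𝓝 ((0, 0) : E × F) := by
  simpa [Metric.ball, Prod.dist_eq] using Metric.ball_mem_nhds ((0, 0) : E × F) hr

theorem piMap_mul_add (τ : ℂ) (p : ℂ × ℂ) (a b : ℂ) :
    PiMap τ (p.1 * a, p.2 + b) =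
      ((PiMap τ p).1 * exp (2 * (Real.pi : ℂ) * I * b),
        (PiMap τ p).2 * a * exp (2 * (Real.pi : ℂ) * I * τ * b)) := by
  simp only [PiMap, mul_add, exp_add, Prod.mk.injEq, true_and]
  ring

theorem piMap_F100 (τ : ℂ) (p : ℂ × ℂ) : PiMap τ (F100 τ p) = PiMap τ p := by
  have htranslate : F100 τ p = (p.1 * exp (2 * (Real.pi : ℂ) * I * τ), p.2 + -1) := by
    rw [F100, mul_comm, sub_eq_add_neg]
  rw [htranslate, piMap_mul_add]
  simp [exp_neg, exp_two_pi_mul_I]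

theorem F100_preimage_setOf_fst_ne_zero_and_piMap_mem (τ : ℂ) (U : Set (ℂ × ℂ)) :
    F100 τ ⁻¹' {p | p.1 ≠ 0 ∧ PiMap τ p ∈ U} = {p | p.1 ≠ 0 ∧ PiMap τ p ∈ U} := by
  ext p
  simp only [Set.mem_preimage, Set.mem_ofPred_eq, piMap_F100]
  simp only [F100, ne_eq, mul_eq_zero, exp_ne_zero, false_or]

section PhiLift

variable (τ : ℂ) (g₁ g₂ : ℂ × ℂ → ℂ)

theorem piMap_semiconj_phiLift_phiDown :
    Function.Semiconj (PiMap τ) (PhiLift τ g₁ g₂) (phiDown τ g₁ g₂) := fun p =>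
  piMap_mul_add τ p (1 + g₁ (PiMap τ p)) (g₂ (PiMap τ p))

theorem phiLift_commute_F100 : Function.Commute (PhiLift τ g₁ g₂) (F100 τ) := fun p => by
  simp only [PhiLift, piMap_F100]
  simp only [F100, mul_assoc, sub_add_eq_add_sub]

end PhiLift

section PhiDown

variable {τ : ℂ} {g₁ g₂ : ℂ × ℂ → ℂ}

theorem differentiableOn_phiDown {U : Set (ℂ × ℂ)}
    (hg₁ : DifferentiableOn ℂ g₁ U) (hg₂ : DifferentiableOn ℂ g₂ U) :
    DifferentiableOn ℂ (phiDown τ g₁ g₂) U := by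
  unfold phiDown
  fun_prop

theorem hasFDerivAt_phiDown_zero
    (hg₁ : ContinuousAt g₁ (0, 0)) (hg₂ : ContinuousAt g₂ (0, 0))
    (hg₁0 : g₁ (0, 0) = 0) (hg₂0 : g₂ (0, 0) = 0) :
    HasFDerivAt (phiDown τ g₁ g₂) (ContinuousLinearMap.id ℂ (ℂ × ℂ)) (0, 0) := by
  have hX : HasFDerivAt (fun w => exp (2 * (Real.pi : ℂ) * I * g₂ w) • w.1)
      (exp (2 * (Real.pi : ℂ) * I * g₂ (0, 0)) • ContinuousLinearMap.fst ℂ ℂ ℂ) (0, 0) :=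
    hasFDerivAt_smul_of_continuousAt_of_eq_zero (by fun_prop) hasFDerivAt_fst rfl
  have hY : HasFDerivAt
      (fun w => ((1 + g₁ w) * exp (2 * (Real.pi : ℂ) * I * τ * g₂ w)) • w.2)
      (((1 + g₁ (0, 0)) * exp (2 * (Real.pi : ℂ) * I * τ * g₂ (0, 0))) •
        ContinuousLinearMap.snd ℂ ℂ ℂ) (0, 0) :=
    hasFDerivAt_smul_of_continuousAt_of_eq_zero (by fun_prop) hasFDerivAt_snd rfl
  have hφ : phiDown τ g₁ g₂ = fun w =>
      (exp (2 * (Real.pi : ℂ) * I * g₂ w) • w.1,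
        ((1 + g₁ w) * exp (2 * (Real.pi : ℂ) * I * τ * g₂ w)) • w.2) := by
    ext w <;> simp only [phiDown, smul_eq_mul] <;> ring
  rw [hφ]
  exact (hX.prodMk hY).congr_fderiv (by simp [hg₁0, hg₂0])

end PhiDown

theorem statement18_general (τ : ℂ) {U : Set (ℂ × ℂ)} (hU : U ∈ 𝓝 (0, 0))
    (g₁ g₂ : ℂ × ℂ → ℂ) (hg₁ : DifferentiableOn ℂ g₁ U) (hg₂ : DifferentiableOn ℂ g₂ U)
    (hg₁0 : g₁ (0, 0) = 0) (hg₂0 : g₂ (0, 0) = 0) :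
    Function.Semiconj (PiMap τ) (PhiLift τ g₁ g₂) (phiDown τ g₁ g₂) ∧
    (DifferentiableOn ℂ (phiDown τ g₁ g₂) U ∧
      phiDown τ g₁ g₂ (0, 0) = (0, 0) ∧
      HasFDerivAt (phiDown τ g₁ g₂) (ContinuousLinearMap.id ℂ (ℂ × ℂ)) (0, 0)) ∧
    (F100 τ ⁻¹' {p | p.1 ≠ 0 ∧ PiMap τ p ∈ U} = {p | p.1 ≠ 0 ∧ PiMap τ p ∈ U} ∧
      Function.Commute (PhiLift τ g₁ g₂) (F100 τ)) :=
  ⟨piMap_semiconj_phiLift_phiDown τ g₁ g₂,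
    ⟨differentiableOn_phiDown hg₁ hg₂, by simp [phiDown],
      hasFDerivAt_phiDown_zero (hg₁.continuousOn.continuousAt hU)
        (hg₂.continuousOn.continuousAt hU) hg₁0 hg₂0⟩,
    F100_preimage_setOf_fst_ne_zero_and_piMap_mem τ U, phiLift_commute_F100 τ g₁ g₂⟩

/-- (i) `Π ∘ Φ = φ ∘ Π` on `D = Π⁻¹(P_r) ∩ (ℂ* × ℂ)`; (ii) `φ` is
holomorphic on the polydisc `P_r`, fixes the origin and has derivative the identity there;
(iii) `D` is `F₁₀₀`-invariant and `Φ` commutes with `F₁₀₀` on `D`. -/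
theorem statement18 (τ : ℂ) (hτ : 0 < τ.im) (r : ℝ) (hr : 0 < r)
    (g₁ g₂ : ℂ × ℂ → ℂ)
    (hg₁ : DifferentiableOn ℂ g₁ {w : ℂ × ℂ | ‖w.1‖ < r ∧ ‖w.2‖ < r})
    (hg₂ : DifferentiableOn ℂ g₂ {w : ℂ × ℂ | ‖w.1‖ < r ∧ ‖w.2‖ < r})
    (hg₁0 : g₁ (0, 0) = 0) (hg₂0 : g₂ (0, 0) = 0) :
    -- (i)
    (∀ p : ℂ × ℂ, p.1 ≠ 0 →
      PiMap τ p ∈ {w : ℂ × ℂ | ‖w.1‖ < r ∧ ‖w.2‖ < r} →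
      PiMap τ (PhiLift τ g₁ g₂ p) = phiDown τ g₁ g₂ (PiMap τ p)) ∧
    -- (ii)
    (DifferentiableOn ℂ (phiDown τ g₁ g₂)
        {w : ℂ × ℂ | ‖w.1‖ < r ∧ ‖w.2‖ < r} ∧
      phiDown τ g₁ g₂ (0, 0) = (0, 0) ∧
      HasFDerivAt (phiDown τ g₁ g₂) (ContinuousLinearMap.id ℂ (ℂ × ℂ)) (0, 0)) ∧
    -- (iii)
    ((∀ p : ℂ × ℂ, p.1 ≠ 0 →
        PiMap τ p ∈ {w : ℂ × ℂ | ‖w.1‖ < r ∧ ‖w.2‖ < r} →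
        (F100 τ p).1 ≠ 0 ∧
          PiMap τ (F100 τ p) ∈
            {w : ℂ × ℂ | ‖w.1‖ < r ∧ ‖w.2‖ < r}) ∧
      ∀ p : ℂ × ℂ, p.1 ≠ 0 →
        PiMap τ p ∈ {w : ℂ × ℂ | ‖w.1‖ < r ∧ ‖w.2‖ < r} →
        PhiLift τ g₁ g₂ (F100 τ p) = F100 τ (PhiLift τ g₁ g₂ p)) := by
  obtain ⟨hsemiconj, hφ, hD, hcomm⟩ := statement18_general τ
    (polydisc_mem_nhds_zero hr) g₁ g₂ hg₁ hg₂ hg₁0 hg₂0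
  exact ⟨fun p _ _ => hsemiconj p, hφ, fun _ hp hpU => hD.ge ⟨hp, hpU⟩, fun p _ _ => hcomm p⟩
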